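/- In the E_q(2) example with entwining data (E_q(2), C, ψ, c_s, ψ^C) where ψ^C(c_p ⊗ c_r) = c_r ⊗ c_{p+r−s}, the linear map Φ : C → E_q(2), Φ(c_p) = v^{p−s}, is convolution invertible with Φ⁻¹(c_p) = v^{−p+s}, satisfies Φ(c_s) = 1, and satisfies ψ∘(id_C ⊗ Φ) = (Φ ⊗ id_C)∘ψ^C. Consequently E_q(2) ≅ X_q ×_Φ C is a cleft extension, with trivial cocycle σ(c_p ⊗ c_r) = 1 and ρ given by ρ(c_p ⊗ v^{±1}) = 1, ρ(c_p ⊗ n) = q^{2p}(q^{−2s}n + μ(v−1)), ρ(c_p ⊗ n̄) = q^{2p}(q^{−2s}n̄ + ν(v⁻¹−1)). -/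

import Mathlib

open TensorProduct LinearMap

noncomputable section

namespace Entwine

variable (k : Type) [Field k] (P : Type) [Ring P] [Algebra k P]
  (C : Type) [AddCommGroup C] [Module k C] [Coalgebra k C]

/-- coproduct of `C` -/
abbrev Δ : C →ₗ[k] C ⊗[k] C := Coalgebra.comul
/-- counit of `C` -/
abbrev ε : C →ₗ[k] k := Coalgebra.counit
/-- multiplication of `P` -/
abbrev μ : P ⊗[k] P →ₗ[k] P := LinearMap.mul' k P

variable (ψ : C ⊗[k] P →ₗ[k] P ⊗[k] C)

/-- entwining axiom `ψ∘(id⊗μ) = (μ⊗id)∘ψ₂₃∘ψ₁₂` -/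
def AxMul : Prop :=
  ψ ∘ₗ map LinearMap.id (μ k P) =
    map (μ k P) LinearMap.id
      ∘ₗ (TensorProduct.assoc k P P C).symm.toLinearMap
      ∘ₗ map LinearMap.id ψ
      ∘ₗ (TensorProduct.assoc k P C P).toLinearMap
      ∘ₗ map ψ LinearMap.id
      ∘ₗ (TensorProduct.assoc k C P P).symm.toLinearMap

/-- entwining axiom `ψ(c ⊗ 1) = 1 ⊗ c` -/
def AxOne : Prop := ∀ c : C, ψ (c ⊗ₜ (1 : P)) = (1 : P) ⊗ₜ c

/-- entwining axiom `(id⊗Δ)∘ψ = ψ₁₂∘ψ₂₃∘(Δ⊗id)` -/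
def AxComul : Prop :=
  map LinearMap.id (Δ k C) ∘ₗ ψ =
    (TensorProduct.assoc k P C C).toLinearMap
      ∘ₗ map ψ LinearMap.id
      ∘ₗ (TensorProduct.assoc k C P C).symm.toLinearMap
      ∘ₗ map LinearMap.id ψ
      ∘ₗ (TensorProduct.assoc k C C P).toLinearMap
      ∘ₗ map (Δ k C) LinearMap.id

/-- entwining axiom `(id⊗ε)∘ψ = ε⊗id` -/
def AxCounit : Prop :=
  (TensorProduct.rid k P).toLinearMap ∘ₗ map LinearMap.id (ε k C) ∘ₗ ψ =
    (TensorProduct.lid k P).toLinearMap ∘ₗ map (ε k C) LinearMap.id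

/-- `ψ` is an entwining map for the algebra `P` and the coalgebra `C` -/
def IsEntwining : Prop :=
  AxMul k P C ψ ∧ AxOne k P C ψ ∧ AxComul k P C ψ ∧ AxCounit k P C ψ

variable (e : C)

/-- `e` is a group-like element -/
def IsGrouplike : Prop :=
  Δ k C e = e ⊗ₜ[k] e ∧ ε k C e = 1

variable (ψC : C ⊗[k] C →ₗ[k] C ⊗[k] C)

/-- `(id⊗Δ)∘ψ^C = ψ^C₁₂∘ψ^C₂₃∘(Δ⊗id)` -/
def AxPsiCComul : Prop :=
  map LinearMap.id (Δ k C) ∘ₗ ψC =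
    (TensorProduct.assoc k C C C).toLinearMap
      ∘ₗ map ψC LinearMap.id
      ∘ₗ (TensorProduct.assoc k C C C).symm.toLinearMap
      ∘ₗ map LinearMap.id ψC
      ∘ₗ (TensorProduct.assoc k C C C).toLinearMap
      ∘ₗ map (Δ k C) LinearMap.id

/-- `(id⊗ε)∘ψ^C = ε⊗id` -/
def AxPsiCCounit : Prop :=
  (TensorProduct.rid k C).toLinearMap ∘ₗ map LinearMap.id (ε k C) ∘ₗ ψC =
    (TensorProduct.lid k C).toLinearMap ∘ₗ map (ε k C) LinearMap.id

/-- `ψ^C(e ⊗ c) = Δc` -/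
def AxPsiCUnit : Prop := ∀ c : C, ψC (e ⊗ₜ[k] c) = Δ k C c

/-- `(P, C, ψ, e, ψ^C)` form entwining data -/
def IsEntwiningData : Prop :=
  IsEntwining k P C ψ ∧ IsGrouplike k C e ∧
    AxPsiCComul k C ψC ∧ AxPsiCCounit k C ψC ∧ AxPsiCUnit k C e ψC

/-- the right coaction `Δ_R u = ψ(e ⊗ u)` on `P` -/
def deltaR : P →ₗ[k] P ⊗[k] C := ψ ∘ₗ TensorProduct.mk k C P e

/-- the fixed point subspace `M = P^{coC}_e`, as a submodule of `P` -/
def Msub : Submodule k P where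
  carrier := {x : P | ψ (e ⊗ₜ x) = x ⊗ₜ e}
  add_mem' := by
    intro a b ha hb
    simp only [Set.mem_setOf_eq] at *
    rw [TensorProduct.tmul_add, map_add, ha, hb, TensorProduct.add_tmul]
  zero_mem' := by
    simp only [Set.mem_setOf_eq, TensorProduct.tmul_zero, map_zero,
      TensorProduct.zero_tmul]
  smul_mem' := by
    intro r x hx
    simp only [Set.mem_setOf_eq] at *
    rw [TensorProduct.tmul_smul, map_smul, hx, TensorProduct.smul_tmul']

/-- the subspace `M ⊗ C` of `P ⊗ C` -/
def MCsub : Submodule k (P ⊗[k] C) :=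
  LinearMap.range (map (Msub k P C ψ e).subtype (LinearMap.id : C →ₗ[k] C))

variable (ρ : C ⊗[k] P →ₗ[k] P) (σ : C ⊗[k] C →ₗ[k] P)

/-- the map `ρ̂ : c ⊗ x ↦ ρ(c₍₁₎ ⊗ x_α) ⊗ c₍₂₎^α` -/
def rhat : C ⊗[k] P →ₗ[k] P ⊗[k] C :=
  map ρ LinearMap.id
    ∘ₗ (TensorProduct.assoc k C P C).symm.toLinearMap
    ∘ₗ map LinearMap.id ψ
    ∘ₗ (TensorProduct.assoc k C C P).toLinearMap
    ∘ₗ map (Δ k C) LinearMap.id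

/-- the map `σ̂ : b ⊗ c ↦ σ(b₍₁₎ ⊗ c_A) ⊗ b₍₂₎^A` -/
def shat : C ⊗[k] C →ₗ[k] P ⊗[k] C :=
  map σ LinearMap.id
    ∘ₗ (TensorProduct.assoc k C C C).symm.toLinearMap
    ∘ₗ map LinearMap.id ψC
    ∘ₗ (TensorProduct.assoc k C C C).toLinearMap
    ∘ₗ map (Δ k C) LinearMap.id

/-- multiplication of the first two factors: `x ⊗ (y ⊗ c) ↦ xy ⊗ c` -/
def mulPC : P ⊗[k] (P ⊗[k] C) →ₗ[k] P ⊗[k] C :=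
  map (μ k P) LinearMap.id ∘ₗ (TensorProduct.assoc k P P C).symm.toLinearMap

/-- the crossed product `(x ⊗ b)(y ⊗ c) = xρ(b₍₁₎⊗y_α)σ(b₍₂₎^α₍₁₎⊗c_A) ⊗ b₍₂₎^α₍₂₎^A` -/
def prodX : (P ⊗[k] C) ⊗[k] (P ⊗[k] C) →ₗ[k] P ⊗[k] C :=
  mulPC k P C
    ∘ₗ map LinearMap.id (mulPC k P C)
    ∘ₗ map LinearMap.id
        (map LinearMap.id (shat k P C ψC σ)
          ∘ₗ (TensorProduct.assoc k P C C).toLinearMap)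
    ∘ₗ map LinearMap.id
        (map (rhat k P C ψ ρ) LinearMap.id
          ∘ₗ (TensorProduct.assoc k C P C).symm.toLinearMap)
    ∘ₗ (TensorProduct.assoc k P C (P ⊗[k] C)).toLinearMap

/-- condition (i): `ρ(e,x) = x` for `x ∈ M` and `ρ(c,1) = ε(c)1` -/
def CondI : Prop :=
  (∀ x : P, x ∈ Msub k P C ψ e → ρ (e ⊗ₜ x) = x) ∧
    ∀ c : C, ρ (c ⊗ₜ (1 : P)) = ε k C c • (1 : P)

/-- condition (ii): `ρ̂` maps `C ⊗ M` into `M ⊗ C` -/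
def CondII : Prop :=
  ∀ (c : C) (x : P), x ∈ Msub k P C ψ e →
    rhat k P C ψ ρ (c ⊗ₜ x) ∈ MCsub k P C ψ e

/-- the right hand side of condition (iii): `(μ⊗id)∘(id⊗ρ̂)∘(ρ̂⊗id)` -/
def BmapIII : C ⊗[k] (P ⊗[k] P) →ₗ[k] P ⊗[k] C :=
  mulPC k P C
    ∘ₗ map LinearMap.id (rhat k P C ψ ρ)
    ∘ₗ (TensorProduct.assoc k P C P).toLinearMap
    ∘ₗ map (rhat k P C ψ ρ) LinearMap.id
    ∘ₗ (TensorProduct.assoc k C P P).symm.toLinearMap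

/-- condition (iii): twisted multiplicativity of `ρ` -/
def CondIII : Prop :=
  ∀ (c : C) (x y : P), x ∈ Msub k P C ψ e → y ∈ Msub k P C ψ e →
    rhat k P C ψ ρ (c ⊗ₜ (x * y)) = BmapIII k P C ψ ρ (c ⊗ₜ (x ⊗ₜ y))

/-- `σ` takes values in `M` -/
def SigmaIntoM : Prop := ∀ b c : C, σ (b ⊗ₜ c) ∈ Msub k P C ψ e

/-- condition (iv): `σ(e⊗c) = ε(c)1` and `σ(c₍₁₎⊗e_A) ⊗ c₍₂₎^A = 1 ⊗ c` -/
def CondIV : Prop :=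
  (∀ c : C, σ (e ⊗ₜ c) = ε k C c • (1 : P)) ∧
    ∀ c : C, shat k P C ψC σ (c ⊗ₜ e) = (1 : P) ⊗ₜ c

/-- `(ρ, σ)` are crossed product data: conditions (i)–(iv). -/
def IsCrossedData : Prop :=
  CondI k P C ψ e ρ ∧ CondII k P C ψ e ρ ∧ CondIII k P C ψ e ρ ∧
    SigmaIntoM k P C ψ e σ ∧ CondIV k P C e ψC σ

/-- left hand side of the cocycle condition (2.6) -/
def CocLHS : C ⊗[k] (C ⊗[k] C) →ₗ[k] P ⊗[k] C :=
  mulPC k P C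
    ∘ₗ map LinearMap.id (shat k P C ψC σ)
    ∘ₗ (TensorProduct.assoc k P C C).toLinearMap
    ∘ₗ map (rhat k P C ψ ρ) LinearMap.id
    ∘ₗ (TensorProduct.assoc k C P C).symm.toLinearMap
    ∘ₗ map LinearMap.id (shat k P C ψC σ)

/-- right hand side of the cocycle condition (2.6) -/
def CocRHS : C ⊗[k] (C ⊗[k] C) →ₗ[k] P ⊗[k] C :=
  mulPC k P C
    ∘ₗ map LinearMap.id (shat k P C ψC σ)
    ∘ₗ (TensorProduct.assoc k P C C).toLinearMap
    ∘ₗ map (shat k P C ψC σ) LinearMap.id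
    ∘ₗ (TensorProduct.assoc k C C C).symm.toLinearMap

/-- the cocycle condition (2.6) -/
def Cocycle : Prop := CocLHS k P C ψ ψC ρ σ = CocRHS k P C ψC σ

/-- left hand side of the twisted module condition (2.7) -/
def TwLHS : C ⊗[k] (C ⊗[k] P) →ₗ[k] P ⊗[k] C :=
  mulPC k P C
    ∘ₗ map LinearMap.id (shat k P C ψC σ)
    ∘ₗ (TensorProduct.assoc k P C C).toLinearMap
    ∘ₗ map (rhat k P C ψ ρ) LinearMap.id
    ∘ₗ (TensorProduct.assoc k C P C).symm.toLinearMap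
    ∘ₗ map LinearMap.id (rhat k P C ψ ρ)

/-- right hand side of the twisted module condition (2.7) -/
def TwRHS : C ⊗[k] (C ⊗[k] P) →ₗ[k] P ⊗[k] C :=
  mulPC k P C
    ∘ₗ map LinearMap.id (rhat k P C ψ ρ)
    ∘ₗ (TensorProduct.assoc k P C P).toLinearMap
    ∘ₗ map (shat k P C ψC σ) LinearMap.id
    ∘ₗ (TensorProduct.assoc k C C P).symm.toLinearMap

/-- the twisted module condition (2.7), for `x ∈ M` -/
def Twisted : Prop :=
  ∀ (a b : C) (x : P), x ∈ Msub k P C ψ e →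
    TwLHS k P C ψ ψC ρ σ (a ⊗ₜ (b ⊗ₜ x)) = TwRHS k P C ψ ψC ρ σ (a ⊗ₜ (b ⊗ₜ x))

end Entwine

namespace Entwine

section Cleft
variable (k : Type) [Field k] (P : Type) [Ring P] [Algebra k P]
    (C : Type) [AddCommGroup C] [Module k C] [Coalgebra k C]
    (ψ : C ⊗[k] P →ₗ[k] P ⊗[k] C) (e : C) (ψC : C ⊗[k] C →ₗ[k] C ⊗[k] C)
    (Φ Φi : C →ₗ[k] P)

/-- `Φi` is a convolution inverse of `Φ` in `Hom(C, P)` -/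
def ConvInv : Prop :=
  (μ k P ∘ₗ map Φ Φi ∘ₗ Δ k C = Algebra.linearMap k P ∘ₗ ε k C) ∧
    (μ k P ∘ₗ map Φi Φ ∘ₗ Δ k C = Algebra.linearMap k P ∘ₗ ε k C)

/-- the covariance condition `ψ∘(id⊗Φ) = (Φ⊗id)∘ψ^C` -/
def CovPhi : Prop :=
  ψ ∘ₗ map LinearMap.id Φ = map Φ LinearMap.id ∘ₗ ψC

/-- `ρ(c ⊗ u) = Φ(c₍₁₎) u_α Φ⁻¹(c₍₂₎^α)` -/
def rhoPhi : C ⊗[k] P →ₗ[k] P :=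
  μ k P
    ∘ₗ map LinearMap.id (μ k P)
    ∘ₗ map Φ (map LinearMap.id Φi)
    ∘ₗ map LinearMap.id ψ
    ∘ₗ (TensorProduct.assoc k C C P).toLinearMap
    ∘ₗ map (Δ k C) LinearMap.id

/-- `σ(b ⊗ c) = Φ(b₍₁₎) Φ(c_A) Φ⁻¹(b₍₂₎^A)` -/
def sigmaPhi : C ⊗[k] C →ₗ[k] P :=
  μ k P
    ∘ₗ map LinearMap.id (μ k P)
    ∘ₗ map Φ (map Φ Φi)
    ∘ₗ map LinearMap.id ψC
    ∘ₗ (TensorProduct.assoc k C C C).toLinearMap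
    ∘ₗ map (Δ k C) LinearMap.id

/-- `Θ : x ⊗ c ↦ x Φ(c)` -/
def Theta : P ⊗[k] C →ₗ[k] P := μ k P ∘ₗ map LinearMap.id Φ

/-- `Θ⁻¹ : u ↦ u_α Φ⁻¹(e^α₍₁₎) ⊗ e^α₍₂₎` -/
def ThetaInv : P →ₗ[k] P ⊗[k] C :=
  mulPC k P C
    ∘ₗ map LinearMap.id (map Φi LinearMap.id)
    ∘ₗ map LinearMap.id (Δ k C)
    ∘ₗ deltaR k P C ψ e

end Cleft

end Entwine

namespace Eq2Ex

variable (k : Type) [Field k] (q : kˣ)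

/-- the defining relations of the quantum Euclidean group `E_q(2)`, on the free
algebra with generators `0 ↦ v`, `1 ↦ v⁻¹`, `2 ↦ n`, `3 ↦ n̄`:
`vn = q²nv`, `vn̄ = q²n̄v`, `nn̄ = q²n̄n`, `vv⁻¹ = v⁻¹v = 1`. -/
inductive EqRel : FreeAlgebra k (Fin 4) → FreeAlgebra k (Fin 4) → Prop
  | vn : EqRel (FreeAlgebra.ι k 0 * FreeAlgebra.ι k 2)
      (((q : k) ^ 2) • (FreeAlgebra.ι k 2 * FreeAlgebra.ι k 0))
  | vnb : EqRel (FreeAlgebra.ι k 0 * FreeAlgebra.ι k 3)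
      (((q : k) ^ 2) • (FreeAlgebra.ι k 3 * FreeAlgebra.ι k 0))
  | nnb : EqRel (FreeAlgebra.ι k 2 * FreeAlgebra.ι k 3)
      (((q : k) ^ 2) • (FreeAlgebra.ι k 3 * FreeAlgebra.ι k 2))
  | vvi : EqRel (FreeAlgebra.ι k 0 * FreeAlgebra.ι k 1) 1
  | viv : EqRel (FreeAlgebra.ι k 1 * FreeAlgebra.ι k 0) 1

/-- the quantum Euclidean group `E_q(2)` -/
abbrev Eq2 : Type := RingQuot (EqRel k q)

/-- the generator `v` -/
def vE : Eq2 k q := RingQuot.mkAlgHom k (EqRel k q) (FreeAlgebra.ι k 0)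
/-- the generator `v⁻¹` -/
def viE : Eq2 k q := RingQuot.mkAlgHom k (EqRel k q) (FreeAlgebra.ι k 1)
/-- the generator `n` -/
def nE : Eq2 k q := RingQuot.mkAlgHom k (EqRel k q) (FreeAlgebra.ι k 2)
/-- the generator `n̄` -/
def nbE : Eq2 k q := RingQuot.mkAlgHom k (EqRel k q) (FreeAlgebra.ι k 3)

/-- the coalgebra `C` spanned by the group-like elements `c_p`, `p ∈ ℤ` -/
abbrev Cz : Type := ℤ →₀ k

/-- the group-like basis element `c_p` -/
def cz (p : ℤ) : Cz k := Finsupp.single p (1 : k)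

variable (μv νv : kˣ) (s : ℤ)

/-- `ψ` takes the prescribed values on the generators of `E_q(2)`. -/
def PsiOnGens (ψ : Cz k ⊗[k] Eq2 k q →ₗ[k] Eq2 k q ⊗[k] Cz k) : Prop :=
  (∀ p : ℤ, ψ (cz k p ⊗ₜ vE k q) = vE k q ⊗ₜ cz k (p + 1)) ∧
  (∀ p : ℤ, ψ (cz k p ⊗ₜ viE k q) = viE k q ⊗ₜ cz k (p - 1)) ∧
  (∀ p : ℤ, ψ (cz k p ⊗ₜ nE k q) =
    nE k q ⊗ₜ cz k p
      + ((μv : k) * ((q ^ (2 * p) : kˣ) : k)) • (vE k q ⊗ₜ cz k p)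
      - ((μv : k) * ((q ^ (2 * p) : kˣ) : k)) • (vE k q ⊗ₜ cz k (p + 1))) ∧
  (∀ p : ℤ, ψ (cz k p ⊗ₜ nbE k q) =
    nbE k q ⊗ₜ cz k p
      + ((νv : k) * ((q ^ (2 * p) : kˣ) : k)) • (viE k q ⊗ₜ cz k p)
      - ((νv : k) * ((q ^ (2 * p) : kˣ) : k)) • (viE k q ⊗ₜ cz k (p - 1)))

end Eq2Ex

namespace Eq2Ex

/-- integer powers of `v`: `v^m` for `m ≥ 0` and `(v⁻¹)^{-m}` for `m < 0` -/
def vzE (k : Type) [Field k] (q : kˣ) (m : ℤ) : Eq2 k q :=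
  if 0 ≤ m then vE k q ^ m.toNat else viE k q ^ (-m).toNat

/-- the trivialisation `Φ(c_p) = v^{p-s}` -/
def PhiE (k : Type) [Field k] (q : kˣ) (s : ℤ) : Cz k →ₗ[k] Eq2 k q :=
  Finsupp.lsum k fun p : ℤ => LinearMap.toSpanSingleton k (Eq2 k q) (vzE k q (p - s))

/-- the convolution inverse `Φ⁻¹(c_p) = v^{-p+s}` -/
def PhiiE (k : Type) [Field k] (q : kˣ) (s : ℤ) : Cz k →ₗ[k] Eq2 k q :=
  Finsupp.lsum k fun p : ℤ => LinearMap.toSpanSingleton k (Eq2 k q) (vzE k q (s - p))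

section Entwining

variable {k : Type} [Field k] {P : Type} [Ring P] [Algebra k P]
  {C : Type} [AddCommGroup C] [Module k C] {ψ : C ⊗[k] P →ₗ[k] P ⊗[k] C}

lemma mulPC_tmul (x y : P) (c : C) :
    Entwine.mulPC k P C (x ⊗ₜ (y ⊗ₜ c)) = (x * y) ⊗ₜ c := by
  simp [Entwine.mulPC]

lemma psi_mul_of_eq_tmul (h : Entwine.AxMul k P C ψ) {c d : C} {a a' : P}
    (ha : ψ (c ⊗ₜ a) = a' ⊗ₜ d) (b : P) :
    ψ (c ⊗ₜ (a * b)) = Entwine.mulPC k P C (a' ⊗ₜ ψ (d ⊗ₜ b)) := by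
  have := LinearMap.congr_fun h (c ⊗ₜ (a ⊗ₜ b))
  simpa [ha, Entwine.mulPC] using this

lemma psi_mul_tmul (h : Entwine.AxMul k P C ψ) {c d d' : C} {a a' b b' : P}
    (ha : ψ (c ⊗ₜ a) = a' ⊗ₜ d) (hb : ψ (d ⊗ₜ b) = b' ⊗ₜ d') :
    ψ (c ⊗ₜ (a * b)) = (a' * b') ⊗ₜ d' := by
  rw [psi_mul_of_eq_tmul h ha, hb, mulPC_tmul]

end Entwining

section GroupLike

variable {k : Type} [Field k]

lemma comul_cz (p : ℤ) :
    (Coalgebra.comul : Cz k →ₗ[k] Cz k ⊗[k] Cz k) (cz k p) = cz k p ⊗ₜ cz k p := by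
  simp [cz]

lemma counit_cz (p : ℤ) : (Coalgebra.counit : Cz k →ₗ[k] k) (cz k p) = 1 := by
  simp [cz]

lemma Cz.hom_ext {M : Type*} [AddCommMonoid M] [Module k M] {f g : Cz k →ₗ[k] M}
    (h : ∀ p, f (cz k p) = g (cz k p)) : f = g := by
  refine Finsupp.lhom_ext' fun p => LinearMap.ext_ring ?_
  simpa [cz] using h p

lemma exists_eq_sum_tmul_cz {M : Type*} [AddCommGroup M] [Module k M] (t : M ⊗[k] Cz k) :
    ∃ f : ℤ →₀ M, t = f.sum fun p x => x ⊗ₜ cz k p := by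
  induction t using TensorProduct.induction_on with
  | zero => exact ⟨0, by simp⟩
  | tmul x c =>
    induction c using Finsupp.induction_linear with
    | zero => exact ⟨0, by simp⟩
    | add c d hc hd =>
      obtain ⟨f, hf⟩ := hc
      obtain ⟨g, hg⟩ := hd
      refine ⟨f + g, ?_⟩
      rw [TensorProduct.tmul_add, hf, hg, Finsupp.sum_add_index' (by simp)
        (by simp [TensorProduct.add_tmul])]
    | single p a =>
      refine ⟨Finsupp.single p (a • x), ?_⟩
      rw [Finsupp.sum_single_index (by simp), TensorProduct.smul_tmul]
      simp [cz]
  | add t u ht hu =>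
    obtain ⟨f, hf⟩ := ht
    obtain ⟨g, hg⟩ := hu
    refine ⟨f + g, ?_⟩
    rw [hf, hg, Finsupp.sum_add_index' (by simp) (by simp [TensorProduct.add_tmul])]

lemma sum_tmul_cz_injective {M : Type*} [AddCommGroup M] [Module k M] (S : Finset ℤ)
    {f g : ℤ → M} (h : ∑ p ∈ S, f p ⊗ₜ[k] cz k p = ∑ p ∈ S, g p ⊗ₜ[k] cz k p)
    {p : ℤ} (hp : p ∈ S) : f p = g p := by
  have := congrArg ((TensorProduct.rid k M).toLinearMap ∘ₗ
    map LinearMap.id (Finsupp.lapply p)) h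
  simpa [cz, Finsupp.single_apply, hp] using this

variable {P : Type} [Ring P] [Algebra k P] {ψ : Cz k ⊗[k] P →ₗ[k] P ⊗[k] Cz k}

/-- The homogeneous components of `u` for the coaction `u ↦ ψ (c_s ⊗ u)`. -/
lemma exists_homogeneous_decomposition (hcom : Entwine.AxComul k P (Cz k) ψ)
    (hcou : Entwine.AxCounit k P (Cz k) ψ) (s : ℤ) (u : P) :
    ∃ (S : Finset ℤ) (f : ℤ → P), u = ∑ p ∈ S, f p ∧
      ∀ p ∈ S, ψ (cz k s ⊗ₜ f p) = f p ⊗ₜ cz k p := by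
  obtain ⟨f, hf⟩ := exists_eq_sum_tmul_cz (ψ (cz k s ⊗ₜ u))
  rw [Finsupp.sum] at hf
  refine ⟨f.support, f, ?_, fun p hp => ?_⟩
  · have := LinearMap.congr_fun hcou (cz k s ⊗ₜ u)
    simpa [hf, counit_cz] using this.symm
  · have := LinearMap.congr_fun hcom (cz k s ⊗ₜ u)
    simp only [coe_comp, Function.comp_apply, map_tmul, id_coe, id_eq, LinearEquiv.coe_coe,
      comul_cz, assoc_tmul, hf, map_sum, tmul_sum, assoc_symm_tmul] at this
    have := congrArg (TensorProduct.assoc k P (Cz k) (Cz k)).symm this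
    simp only [map_sum, assoc_symm_tmul, LinearEquiv.symm_apply_apply] at this
    exact (sum_tmul_cz_injective f.support
      (f := fun p => f p ⊗ₜ[k] cz k p) (g := fun p => ψ (cz k s ⊗ₜ f p)) this hp).symm

end GroupLike

section Generators

variable (k : Type) [Field k] (q : kˣ)

lemma vE_mul_viE : vE k q * viE k q = 1 := by
  simpa [vE, viE] using RingQuot.mkAlgHom_rel k (EqRel.vvi (k := k) (q := q))

lemma viE_mul_vE : viE k q * vE k q = 1 := by
  simpa [vE, viE] using RingQuot.mkAlgHom_rel k (EqRel.viv (k := k) (q := q))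

lemma vE_mul_nE : vE k q * nE k q = ((q : k) ^ 2) • (nE k q * vE k q) := by
  simpa [vE, nE] using RingQuot.mkAlgHom_rel k (EqRel.vn (k := k) (q := q))

lemma vE_mul_nbE : vE k q * nbE k q = ((q : k) ^ 2) • (nbE k q * vE k q) := by
  simpa [vE, nbE] using RingQuot.mkAlgHom_rel k (EqRel.vnb (k := k) (q := q))

/-- `v` as a unit of `E_q(2)`. -/
def vUnit : (Eq2 k q)ˣ := ⟨vE k q, viE k q, vE_mul_viE k q, viE_mul_vE k q⟩

lemma vzE_eq (m : ℤ) : vzE k q m = ((vUnit k q ^ m : (Eq2 k q)ˣ) : Eq2 k q) := by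
  unfold vzE
  split_ifs with h
  · lift m to ℕ using h
    simp [vUnit]
  · obtain ⟨n, rfl⟩ : ∃ n : ℕ, m = -n := ⟨(-m).toNat, by omega⟩
    simp [vUnit, ← inv_pow]

lemma vzE_zero : vzE k q 0 = 1 := by simp [vzE_eq]

lemma vzE_one : vzE k q 1 = vE k q := by simp [vzE_eq, vUnit]

lemma vzE_neg_one : vzE k q (-1) = viE k q := by simp [vzE_eq, vUnit]

lemma vzE_mul (a b : ℤ) : vzE k q a * vzE k q b = vzE k q (a + b) := by
  simp [vzE_eq, zpow_add]

variable {k q} in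
lemma vzE_mul_of_comm {x : Eq2 k q} (hx : vE k q * x = ((q : k) ^ 2) • (x * vE k q)) (m : ℤ) :
    vzE k q m * x = ((q ^ (2 * m) : kˣ) : k) • (x * vzE k q m) := by
  have hx' : viE k q * x = ((q ^ (-2 : ℤ) : kˣ) : k) • (x * viE k q) := by
    have h : viE k q * (vE k q * x) * viE k q
        = viE k q * (((q : k) ^ 2) • (x * vE k q)) * viE k q := by rw [hx]
    rw [← mul_assoc, viE_mul_vE, one_mul, mul_smul_comm, smul_mul_assoc, mul_assoc, mul_assoc,
      vE_mul_viE, mul_one] at h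
    rw [h, smul_smul]
    have : ((q ^ (-2 : ℤ) : kˣ) : k) * (q : k) ^ 2 = 1 := by
      rw [← Units.val_pow_eq_pow_val, ← Units.val_mul, ← zpow_natCast, ← zpow_add]
      simp
    rw [this, one_smul]
  induction m using Int.induction_on with
  | zero => simp [vzE_zero]
  | succ i ih =>
    rw [← vzE_mul, mul_assoc, vzE_one, hx, mul_smul_comm, ← mul_assoc, ih, smul_mul_assoc,
      smul_smul, mul_assoc]
    congr 1
    rw [mul_add, zpow_add, mul_comm]
    simp
  | pred i ih =>
    rw [sub_eq_add_neg, ← vzE_mul, mul_assoc, vzE_neg_one, hx', mul_smul_comm, ← mul_assoc, ih,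
      smul_mul_assoc, smul_smul, mul_assoc, mul_add, zpow_add, mul_comm, Units.val_mul]
    rfl

lemma PhiE_cz (s p : ℤ) : PhiE k q s (cz k p) = vzE k q (p - s) := by
  simp [PhiE, cz]

lemma PhiiE_cz (s p : ℤ) : PhiiE k q s (cz k p) = vzE k q (s - p) := by
  simp [PhiiE, cz]

variable {k q} {μv νv : kˣ} {ψ : Cz k ⊗[k] Eq2 k q →ₗ[k] Eq2 k q ⊗[k] Cz k}

lemma psi_vzE (hgen : PsiOnGens k q μv νv ψ) (hmul : Entwine.AxMul k (Eq2 k q) (Cz k) ψ)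
    (hone : Entwine.AxOne k (Eq2 k q) (Cz k) ψ) (p m : ℤ) :
    ψ (cz k p ⊗ₜ vzE k q m) = vzE k q m ⊗ₜ cz k (p + m) := by
  induction m using Int.induction_on with
  | zero => simp [vzE_zero, hone (cz k p)]
  | succ i ih =>
    rw [← vzE_mul, vzE_one, psi_mul_tmul hmul ih (hgen.1 _), add_assoc]
  | pred i ih =>
    rw [sub_eq_add_neg, ← vzE_mul, vzE_neg_one, psi_mul_tmul hmul ih (hgen.2.1 _), ← add_assoc,
      sub_eq_add_neg (p + _)]

lemma rhoPhi_cz (ψ : Cz k ⊗[k] Eq2 k q →ₗ[k] Eq2 k q ⊗[k] Cz k) (s p : ℤ) (u : Eq2 k q) :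
    Entwine.rhoPhi k (Eq2 k q) (Cz k) ψ (PhiE k q s) (PhiiE k q s) (cz k p ⊗ₜ u) =
      vzE k q (p - s) *
        Entwine.μ k (Eq2 k q) (map LinearMap.id (PhiiE k q s) (ψ (cz k p ⊗ₜ u))) := by
  simp [Entwine.rhoPhi, comul_cz, PhiE_cz]

lemma rhoPhi_vzE (hgen : PsiOnGens k q μv νv ψ) (hmul : Entwine.AxMul k (Eq2 k q) (Cz k) ψ)
    (hone : Entwine.AxOne k (Eq2 k q) (Cz k) ψ) (s p m : ℤ) :
    Entwine.rhoPhi k (Eq2 k q) (Cz k) ψ (PhiE k q s) (PhiiE k q s) (cz k p ⊗ₜ vzE k q m) = 1 := by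
  rw [rhoPhi_cz, psi_vzE hgen hmul hone]
  simp only [map_tmul, id_coe, id_eq, mul'_apply, PhiiE_cz, vzE_mul]
  rw [← vzE_zero k q]
  congr 1
  ring

/-- The value of `ρ` on an element `x` with `v x = q² x v` whose `ψ`-image is that of a
skew-primitive element of degree `m`. -/
lemma rhoPhi_of_comm {x : Eq2 k q} (hx : vE k q * x = ((q : k) ^ 2) • (x * vE k q)) {a : k}
    {p m : ℤ} (hψ : ψ (cz k p ⊗ₜ x) = x ⊗ₜ cz k p
      + (a * ((q ^ (2 * p) : kˣ) : k)) • (vzE k q m ⊗ₜ cz k p)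
      - (a * ((q ^ (2 * p) : kˣ) : k)) • (vzE k q m ⊗ₜ cz k (p + m))) (s : ℤ) :
    Entwine.rhoPhi k (Eq2 k q) (Cz k) ψ (PhiE k q s) (PhiiE k q s) (cz k p ⊗ₜ x) =
      ((q ^ (2 * p) : kˣ) : k) •
        (((q ^ (-(2 * s)) : kˣ) : k) • x + a • (vzE k q m - 1)) := by
  rw [rhoPhi_cz, hψ]
  simp only [map_sub, map_add, map_smul, map_tmul, id_coe, id_eq, mul'_apply, PhiiE_cz, vzE_mul,
    mul_sub, mul_add, mul_smul_comm]
  rw [← mul_assoc, vzE_mul_of_comm hx, smul_mul_assoc, mul_assoc, vzE_mul,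
    show p - s + (s - p) = 0 by ring, show p - s + (m + (s - p)) = m by ring,
    show p - s + (m + (s - (p + m))) = 0 by ring, vzE_zero, mul_one,
    show 2 * (p - s) = 2 * p + -(2 * s) by ring, zpow_add, Units.val_mul]
  module

lemma bijOn_Theta (hgen : PsiOnGens k q μv νv ψ)
    (hent : Entwine.IsEntwining k (Eq2 k q) (Cz k) ψ) (s : ℤ) :
    Set.BijOn (Entwine.Theta k (Eq2 k q) (Cz k) (PhiE k q s))
      (Entwine.MCsub k (Eq2 k q) (Cz k) ψ (cz k s)) Set.univ := by
  obtain ⟨hmul, hone, hcom, hcou⟩ := hent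
  refine ⟨Set.mapsTo_univ _ _, ?_, fun u _ => ?_⟩
  · have hinv : Entwine.ThetaInv k (Eq2 k q) (Cz k) ψ (cz k s) (PhiiE k q s)
        ∘ₗ Entwine.Theta k (Eq2 k q) (Cz k) (PhiE k q s)
        ∘ₗ map (Entwine.Msub k (Eq2 k q) (Cz k) ψ (cz k s)).subtype LinearMap.id =
        map (Entwine.Msub k (Eq2 k q) (Cz k) ψ (cz k s)).subtype LinearMap.id := by
      refine TensorProduct.ext (LinearMap.ext fun x => Cz.hom_ext fun p => ?_)
      have hx : ψ (cz k s ⊗ₜ (x : Eq2 k q)) = (x : Eq2 k q) ⊗ₜ cz k s := x.2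
      simp [Entwine.ThetaInv, Entwine.Theta, Entwine.deltaR, PhiE_cz, PhiiE_cz,
        psi_mul_tmul hmul hx (psi_vzE hgen hmul hone s (p - s)), comul_cz, mulPC_tmul,
        mul_assoc, vzE_mul, vzE_zero]
    rintro _ ⟨y, rfl⟩ _ ⟨z, rfl⟩ hyz
    have hy := LinearMap.congr_fun hinv y
    have hz := LinearMap.congr_fun hinv z
    simp only [coe_comp, Function.comp_apply] at hy hz
    rw [← hy, hyz, hz]
  · obtain ⟨S, f, rfl, hf⟩ := exists_homogeneous_decomposition hcom hcou s u
    refine ⟨∑ p ∈ S, (f p * vzE k q (s - p)) ⊗ₜ cz k p, ?_, ?_⟩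
    · refine Submodule.sum_mem _ fun p hp => ?_
      have hmem : f p * vzE k q (s - p) ∈ Entwine.Msub k (Eq2 k q) (Cz k) ψ (cz k s) := by
        change ψ (cz k s ⊗ₜ (f p * vzE k q (s - p))) = (f p * vzE k q (s - p)) ⊗ₜ cz k s
        rw [psi_mul_tmul hmul (hf p hp) (psi_vzE hgen hmul hone p (s - p)), add_sub_cancel]
      exact ⟨⟨_, hmem⟩ ⊗ₜ cz k p, by simp⟩
    · simp [Entwine.Theta, PhiE_cz, mul_assoc, vzE_mul, vzE_zero]

end Generators

/-- In the `E_q(2)` example with `ψ^C(c_p ⊗ c_r) = c_r ⊗ c_{p+r-s}`,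
the map `Φ(c_p) = v^{p-s}` is convolution invertible with inverse
`Φ⁻¹(c_p) = v^{-p+s}`, satisfies `Φ(c_s) = 1` and `ψ∘(id⊗Φ) = (Φ⊗id)∘ψ^C`, so
`E_q(2) ≅ X_q ×_Φ C` is a cleft extension, with trivial cocycle
`σ(c_p ⊗ c_r) = 1` and with `ρ` given by `ρ(c_p ⊗ v^{±1}) = 1`,
`ρ(c_p ⊗ n) = q^{2p}(q^{-2s}n + μ(v-1))`, `ρ(c_p ⊗ n̄) = q^{2p}(q^{-2s}n̄ + ν(v⁻¹-1))`. -/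
theorem eq2_cleft (k : Type) [Field k] (q μv νv : kˣ) (s : ℤ)
    (ψ : Cz k ⊗[k] Eq2 k q →ₗ[k] Eq2 k q ⊗[k] Cz k)
    (hgen : PsiOnGens k q μv νv ψ)
    (hent : Entwine.IsEntwining k (Eq2 k q) (Cz k) ψ)
    (ψC : Cz k ⊗[k] Cz k →ₗ[k] Cz k ⊗[k] Cz k)
    (hψC : ∀ p r : ℤ, ψC (cz k p ⊗ₜ cz k r) = cz k r ⊗ₜ cz k (p + r - s)) :
    (∀ p : ℤ, PhiE k q s (cz k p) = vzE k q (p - s)) ∧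
    PhiE k q s (cz k s) = 1 ∧
    Entwine.ConvInv k (Eq2 k q) (Cz k) (PhiE k q s) (PhiiE k q s) ∧
    Entwine.CovPhi k (Eq2 k q) (Cz k) ψ ψC (PhiE k q s) ∧
    (∀ p r : ℤ,
      Entwine.sigmaPhi k (Eq2 k q) (Cz k) ψC (PhiE k q s) (PhiiE k q s)
        (cz k p ⊗ₜ cz k r) = 1) ∧
    (∀ p : ℤ,
      Entwine.rhoPhi k (Eq2 k q) (Cz k) ψ (PhiE k q s) (PhiiE k q s)
          (cz k p ⊗ₜ vE k q) = 1 ∧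
      Entwine.rhoPhi k (Eq2 k q) (Cz k) ψ (PhiE k q s) (PhiiE k q s)
          (cz k p ⊗ₜ viE k q) = 1 ∧
      Entwine.rhoPhi k (Eq2 k q) (Cz k) ψ (PhiE k q s) (PhiiE k q s)
          (cz k p ⊗ₜ nE k q) =
        ((q ^ (2 * p) : kˣ) : k) •
          (((q ^ (-(2 * s)) : kˣ) : k) • nE k q + (μv : k) • (vE k q - 1)) ∧
      Entwine.rhoPhi k (Eq2 k q) (Cz k) ψ (PhiE k q s) (PhiiE k q s)
          (cz k p ⊗ₜ nbE k q) =
        ((q ^ (2 * p) : kˣ) : k) •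
          (((q ^ (-(2 * s)) : kˣ) : k) • nbE k q + (νv : k) • (viE k q - 1))) ∧
    Set.BijOn (Entwine.Theta k (Eq2 k q) (Cz k) (PhiE k q s))
      (Entwine.MCsub k (Eq2 k q) (Cz k) ψ (cz k s)) Set.univ := by
  obtain ⟨hmul, hone, hcom, hcou⟩ := hent
  refine ⟨PhiE_cz k q s, by simp [PhiE_cz, vzE_zero], ⟨?_, ?_⟩, ?_, fun p r => ?_,
    fun p => ⟨?_, ?_, ?_, ?_⟩, bijOn_Theta hgen ⟨hmul, hone, hcom, hcou⟩ s⟩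
  · exact Cz.hom_ext fun p => by
      simp [comul_cz, counit_cz, PhiE_cz, PhiiE_cz, vzE_mul, vzE_zero]
  · exact Cz.hom_ext fun p => by
      simp [comul_cz, counit_cz, PhiE_cz, PhiiE_cz, vzE_mul, vzE_zero]
  · refine TensorProduct.ext (Cz.hom_ext fun p => Cz.hom_ext fun r => ?_)
    simp [PhiE_cz, psi_vzE hgen hmul hone, hψC, add_sub_assoc]
  · simp only [Entwine.sigmaPhi, coe_comp, Function.comp_apply, map_tmul, id_coe, id_eq,
      LinearEquiv.coe_coe, comul_cz, assoc_tmul, hψC, mul'_apply, PhiE_cz, PhiiE_cz, vzE_mul]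
    rw [← vzE_zero k q]
    congr 1
    ring
  · rw [← vzE_one]
    exact rhoPhi_vzE hgen hmul hone s p 1
  · rw [← vzE_neg_one]
    exact rhoPhi_vzE hgen hmul hone s p (-1)
  · have hψ := hgen.2.2.1 p
    rw [← vzE_one] at hψ ⊢
    exact rhoPhi_of_comm (vE_mul_nE k q) hψ s
  · have hψ := hgen.2.2.2 p
    rw [← vzE_neg_one] at hψ ⊢
    exact rhoPhi_of_comm (vE_mul_nbE k q) hψ s

end Eq2Ex
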